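/- A formula φ of the propositional language ℒ(ℙ) is a theorem of classical propositional logic if and only if φ is valid in the class of relativized Boolean algebras, i.e., for every RBA RB and every homomorphism h : ℒ(ℙ) → RB, h(φ) = 1_{h(φ)} (that is, h(φ) = X ∨ ¬X for some X ∈ RB). -/

import Mathlib

/-!
Validity implies tautology because the two-element Boolean algebra is an RBA and evaluation
`eval v` is a homomorphism into it.

For the converse, order an RBA by its meet (`x ≤ y` iff `x ∧ y = x`). Absorption may fail, and only
the weaker `m ∨ (m ∧ z) = m ∧ 1_z` holds; so below `1_z` the usual Boolean reasoning about `z` is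
sound. Say that `m` forces `x` to be true (false) if `m ≤ x` (`m ≤ ¬x`). An element `m` forcing every
variable of `φ` to have its value under a valuation `v` forces `φ` to have the value `eval v φ`
(`RBA.forces_form`). Since `1_φ ≤ 1_p` for each variable `p` of `φ` (`RBA.one_le_var`), the
element `1_φ` splits as a join of elements that each force the variables according to some
valuation (`RBA.case_split`). If `φ` is a tautology each of these lies below `h φ`, hence
`1_φ ≤ h φ`; as always `h φ ≤ 1_φ`, the two are equal.
-/

structure RBA (α : Type*) where
  meet : α → α → α
  join : α → α → α
  compl : α → α
  bot : α
  top : α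
  meet_assoc : ∀ x y z, meet (meet x y) z = meet x (meet y z)
  meet_comm : ∀ x y, meet x y = meet y x
  join_assoc : ∀ x y z, join (join x y) z = join x (join y z)
  join_comm : ∀ x y, join x y = join y x
  meet_distrib : ∀ x y z, meet x (join y z) = join (meet x y) (meet x z)
  join_distrib : ∀ x y z, join x (meet y z) = meet (join x y) (join x z)
  demorgan_meet : ∀ x y, compl (meet x y) = join (compl x) (compl y)
  demorgan_join : ∀ x y, compl (join x y) = meet (compl x) (compl y)
  meet_idem : ∀ x, meet x x = x
  join_idem : ∀ x, join x x = x
  meet_top : ∀ x, meet x top = x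
  compl_compl : ∀ x, compl (compl x) = x
  join_top : ∀ x, join x top = join x (compl x)
  meet_bot : ∀ x, meet x bot = bot
  rb5 : ∀ x y,
    meet (join x (compl x)) (join y (compl y)) = join x (compl x) →
    compl (meet y (join x (compl x))) = meet (compl y) (join x (compl x))

namespace RBA
variable {α : Type*}

/-- `1_X := X ∨ ¬X` -/
def one (R : RBA α) (x : α) : α := R.join x (R.compl x)

/-- `0_X := X ∧ ¬X` -/
def zero (R : RBA α) (x : α) : α := R.meet x (R.compl x)

/-- `ge R y x` means `y ≥ x`, i.e. `x ∧ y = x`. -/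
def ge (R : RBA α) (y x : α) : Prop := R.meet x y = x

end RBA

/-- The propositional language `ℒ(ℙ)`: `φ ::= p | 1 | ¬φ | (φ∧φ)`. -/
inductive PForm (P : Type*) : Type _ where
  | var : P → PForm P
  | one : PForm P
  | neg : PForm P → PForm P
  | conj : PForm P → PForm P → PForm P

namespace PForm
variable {P : Type*}

def eval (v : P → Bool) : PForm P → Bool
  | .var p => v p
  | .one => true
  | .neg φ => ! φ.eval v
  | .conj φ ψ => φ.eval v && ψ.eval v

end PForm

/-- `φ` is a theorem of (equivalently, a tautology of) classical propositional logic. -/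
def PTautology {P : Type*} (φ : PForm P) : Prop := ∀ v, φ.eval v = true

/-- A homomorphism `h : ℒ(ℙ) → RB`. -/
def IsHom {P α : Type*} (R : RBA α) (h : PForm P → α) : Prop :=
  h .one = R.top ∧ (∀ φ, h (.neg φ) = R.compl (h φ)) ∧
    (∀ φ ψ, h (.conj φ ψ) = R.meet (h φ) (h ψ))

/-- The variables occurring in a formula. -/
def PForm.vars {P : Type*} : PForm P → List P
  | .var p => [p]
  | .one => []
  | .neg φ => φ.vars
  | .conj φ ψ => φ.vars ++ ψ.vars

namespace RBA
variable {α P : Type*}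

/-- `m` forces `x` to have the truth value `b`: `m` lies below `x` or below `¬x` in the meet
order, according to `b`. -/
def Forces (R : RBA α) (m x : α) (b : Bool) : Prop :=
  R.ge (if b then x else R.compl x) m

theorem ge_trans (R : RBA α) {x y z : α} (h₁ : R.ge y x) (h₂ : R.ge z y) : R.ge z x := by
  unfold ge at *
  rw [← h₁, R.meet_assoc, h₂]

theorem meet_le_left (R : RBA α) (x y : α) : R.ge x (R.meet x y) := by
  unfold ge
  rw [R.meet_comm, ← R.meet_assoc, R.meet_idem]

theorem meet_le_right (R : RBA α) (x y : α) : R.ge y (R.meet x y) := by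
  rw [R.meet_comm]
  exact R.meet_le_left y x

theorem le_meet (R : RBA α) {m x y : α} (hx : R.ge x m) (hy : R.ge y m) :
    R.ge (R.meet x y) m := by
  unfold ge at *
  rw [← R.meet_assoc, hx, hy]

theorem one_eq (R : RBA α) (x : α) : R.one x = R.join x R.top := (R.join_top x).symm

theorem one_top (R : RBA α) : R.one R.top = R.top := by
  rw [one_eq, R.join_idem]

theorem one_compl (R : RBA α) (x : α) : R.one (R.compl x) = R.one x := by
  unfold one
  rw [R.compl_compl, R.join_comm]

theorem one_meet (R : RBA α) (x y : α) :
    R.one (R.meet x y) = R.meet (R.one x) (R.one y) := by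
  simp only [one_eq]
  rw [R.join_comm, R.join_distrib, R.join_comm x, R.join_comm y]

theorem le_one (R : RBA α) (x : α) : R.ge (R.one x) x := by
  unfold ge
  rw [one_eq, R.meet_distrib, R.meet_idem, R.meet_top, R.join_idem]

/-- The substitute for absorption: `m ≤ x` gives `m ≤ x ∨ y` as soon as `m ≤ 1_y`, because
`m ∨ (m ∧ y) = m ∧ (1 ∨ y) = m ∧ 1_y`. -/
theorem le_join_left (R : RBA α) {m x y : α} (hx : R.ge x m) (hy : R.ge (R.one y) m) :
    R.ge (R.join x y) m := by
  unfold ge at *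
  rw [one_eq, R.meet_distrib, R.meet_top] at hy
  rw [R.meet_distrib, hx, R.join_comm, hy]

theorem le_one_of_forces (R : RBA α) {m x : α} {b : Bool} (h : R.Forces m x b) :
    R.ge (R.one x) m := by
  cases b
  · rw [← one_compl]
    exact R.ge_trans (by simpa [Forces] using h) (R.le_one _)
  · exact R.ge_trans (by simpa [Forces] using h) (R.le_one _)

theorem forces_form (R : RBA α) (h : PForm P → α) (hh : IsHom R h) (v : P → Bool) (m : α)
    (φ : PForm P) (hm : ∀ p ∈ φ.vars, R.Forces m (h (.var p)) (v p)) :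
    R.Forces m (h φ) (φ.eval v) := by
  obtain ⟨h1, hn, hc⟩ := hh
  induction φ with
  | var p => exact hm p (by simp [PForm.vars])
  | one =>
    simp only [Forces, PForm.eval, h1, if_true]
    exact R.meet_top m
  | neg φ ih =>
    have := ih hm
    revert this
    cases hv : φ.eval v <;> simp [Forces, PForm.eval, hn, hv, R.compl_compl]
  | conj φ ψ ih₁ ih₂ =>
    have f₁ := ih₁ fun p hp => hm p (by simp [PForm.vars, hp])
    have f₂ := ih₂ fun p hp => hm p (by simp [PForm.vars, hp])
    have o₁ : R.ge (R.one (R.compl (h φ))) m := by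
      rw [one_compl]; exact R.le_one_of_forces f₁
    have o₂ : R.ge (R.one (R.compl (h ψ))) m := by
      rw [one_compl]; exact R.le_one_of_forces f₂
    revert f₁ f₂
    cases hv₁ : φ.eval v <;> cases hv₂ : ψ.eval v <;>
      simp only [Forces, PForm.eval, hc, hv₁, hv₂, R.demorgan_meet, Bool.and_true, Bool.and_false,
        if_true, Bool.false_eq_true, if_false] <;> intro f₁ f₂
    · exact R.le_join_left f₁ o₂
    · exact R.le_join_left f₁ o₂
    · rw [R.join_comm]; exact R.le_join_left f₂ o₁
    · exact R.le_meet f₁ f₂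

theorem one_le_var (R : RBA α) (h : PForm P → α) (hh : IsHom R h) (φ : PForm P) (p : P)
    (hp : p ∈ φ.vars) : R.ge (R.one (h (.var p))) (R.one (h φ)) := by
  obtain ⟨h1, hn, hc⟩ := hh
  induction φ with
  | var q =>
    obtain rfl : p = q := by simpa [PForm.vars] using hp
    exact R.meet_idem _
  | one => simp [PForm.vars] at hp
  | neg φ ih =>
    rw [hn, one_compl]
    exact ih hp
  | conj φ ψ ih₁ ih₂ =>
    rw [hc, one_meet]
    rcases List.mem_append.1 hp with hp | hp
    · exact R.ge_trans (R.meet_le_left _ _) (ih₁ hp)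
    · exact R.ge_trans (R.meet_le_right _ _) (ih₂ hp)

/-- Proof by cases on the truth values of finitely many elements `a p`: if `m ≤ 1_{a p}` for all
`p ∈ L`, then `m ≤ x` may be checked on those parts of `m` that decide every `a p`. -/
theorem case_split (R : RBA α) (a : P → α) (x : α) (L : List P) (m : α)
    (hm : ∀ p ∈ L, R.ge (R.one (a p)) m)
    (H : ∀ (v : P → Bool) (m' : α), R.ge m m' → (∀ p ∈ L, R.Forces m' (a p) (v p)) → R.ge x m') :
    R.ge x m := by
  classical
  induction L generalizing m with
  | nil => exact H (fun _ => true) m (R.meet_idem m) (by simp)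
  | cons p L ih =>
    have key : ∀ b : Bool, R.ge x (R.meet m (if b then a p else R.compl (a p))) := by
      intro b
      refine ih _ (fun q hq => R.ge_trans (R.meet_le_left _ _) (hm q (by simp [hq]))) ?_
      intro v m' hm' hv
      have hmm : R.ge m m' := R.ge_trans hm' (R.meet_le_left _ _)
      by_cases hp : p ∈ L
      -- A repeated variable already has its value under `v`, which may differ from `b`.
      · refine H v m' hmm fun q hq => ?_
        rcases List.mem_cons.1 hq with rfl | hq'
        · exact hv _ hp
        · exact hv q hq'
      · refine H (Function.update v p b) m' hmm fun q hq => ?_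
        rcases List.mem_cons.1 hq with rfl | hq'
        · rw [Function.update_self]
          exact R.ge_trans hm' (R.meet_le_right _ _)
        · have hne : q ≠ p := by
            rintro rfl
            exact hp hq'
          rw [Function.update_of_ne hne]
          exact hv q hq'
    have ht := key true
    have hf := key false
    have hs := hm p (by simp)
    simp only [if_true, Bool.false_eq_true, if_false] at ht hf
    unfold ge one at *
    -- `m = (m ∧ a p) ∨ (m ∧ ¬a p)`, and both joinands are unchanged by meeting with `x`.
    rw [R.meet_distrib] at hs
    calc R.meet m x
        = R.meet x (R.join (R.meet m (a p)) (R.meet m (R.compl (a p)))) := by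
          rw [hs, R.meet_comm]
      _ = m := by
          rw [R.meet_distrib, R.meet_comm x, R.meet_comm x, ht, hf, hs]

/-- The two-element Boolean algebra as an RBA. -/
def two : RBA Bool where
  meet := and
  join := or
  compl := not
  bot := false
  top := true
  meet_assoc := by decide
  meet_comm := by decide
  join_assoc := by decide
  join_comm := by decide
  meet_distrib := by decide
  join_distrib := by decide
  demorgan_meet := by decide
  demorgan_join := by decide
  meet_idem := by decide
  join_idem := by decide
  meet_top := by decide
  compl_compl := by decide
  join_top := by decide
  meet_bot := by decide
  rb5 := by decide

end RBA

/-- `φ` is a theorem of classical propositional logic iff `φ` is valid in the class of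
relativized Boolean algebras: for every RBA `RB` and homomorphism `h : ℒ(ℙ) → RB`,
`h(φ) = 1_{h(φ)}`. -/
theorem stmt11 {P : Type} (φ : PForm P) :
    PTautology φ ↔
      ∀ (α : Type) (R : RBA α) (h : PForm P → α),
        IsHom R h → h φ = R.one (h φ) := by
  constructor
  · intro ht α R h hh
    have key : R.ge (h φ) (R.one (h φ)) := by
      refine R.case_split (fun p => h (.var p)) (h φ) φ.vars _ (R.one_le_var h hh φ) ?_
      intro v m _ hv
      have := R.forces_form h hh v m φ hv
      rw [ht v] at this
      simpa [RBA.Forces] using this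
    have le := R.le_one (h φ)
    unfold RBA.ge at key le
    exact le.symm.trans ((R.meet_comm _ _).trans key)
  · intro H v
    have := H Bool RBA.two (fun ψ => ψ.eval v) ⟨rfl, fun _ => rfl, fun _ _ => rfl⟩
    simpa [RBA.one, RBA.two] using this
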